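/- arXiv:2109.09070 — 2 statements merged into one kernel-verified Lean document; each statement's English description precedes it below -/
import Mathlib

section
/- Fix α ≥ 0. For all t > 0 and x, y ≥ 0, the squared Bessel transition density has the integral representation (for x > 0): q_t(x,y) = (y/x)^{α/2} ∫_0^∞ e^{-2tz} J_α(2√(zx)) J_α(2√(zy)) dz, where J_α is the Bessel function of the first kind. -/
/-!
After the powers of `z` are split off, both Bessel functions become the entire function
`C_α(w) = ∑ wⁿ/(n! Γ(n+α+1))`, and the claim is an instance of Weber's second exponential integral
`∫_0^∞ z^α e^{-pz} C_α(zx) C_α(zy) dz = p^{-α-1} e^{(x+y)/p} C_α(xy/p²)`.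
Integrating the double series on the left termwise gives Gamma integrals, with coefficients
`Γ(m+n+α+1)/(m! Γ(m+α+1) n! Γ(n+α+1))`. By the Chu–Vandermonde identity these are
`∑_k 1/(k! Γ(k+α+1) (m-k)! (n-k)!)`, which is what the product of the three series on the right
yields when its terms `(k, i, j)` are collected by `(m, n) = (k+i, k+j)`.
-/

open MeasureTheory

/-- The modified Bessel function of the first kind,
`I_α(z) = ∑_{n≥0} (z/2)^{2n+α}/(n! Γ(n+α+1))`. -/
noncomputable def Ib (α z : ℝ) : ℝ :=
  ∑' n : ℕ, (z / 2) ^ (2 * (n : ℝ) + α) / ((n.factorial : ℝ) * Real.Gamma ((n : ℝ) + α + 1))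

/-- The Bessel function of the first kind,
`J_α(z) = ∑_{n≥0} (-1)^n (z/2)^{2n+α}/(n! Γ(n+α+1))`. -/
noncomputable def Jb (α z : ℝ) : ℝ :=
  ∑' n : ℕ,
    (-1 : ℝ) ^ n * (z / 2) ^ (2 * (n : ℝ) + α) / ((n.factorial : ℝ) * Real.Gamma ((n : ℝ) + α + 1))

/-- The squared Bessel transition density of index `α` (for `x > 0`):
`q_t(x,y) = (2t)⁻¹ (y/x)^{α/2} e^{-(x+y)/(2t)} I_α(√(xy)/t)`. -/
noncomputable def qI (α t x y : ℝ) : ℝ :=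
  (2 * t)⁻¹ * (y / x) ^ (α / 2) * Real.exp (-(x + y) / (2 * t)) * Ib α (Real.sqrt (x * y) / t)

section DoubleSeries

open Finset
open scoped Nat

lemma hasSum_sum_range_min {M : Type*} [AddCommMonoid M] [TopologicalSpace M] [ContinuousAdd M]
    [RegularSpace M] {f : ℕ × ℕ × ℕ → M} {a : M} (hf : HasSum f a) :
    HasSum (fun q : ℕ × ℕ ↦ ∑ k ∈ range (min q.1 q.2 + 1), f (k, q.1 - k, q.2 - k)) a := by
  let shift : ℕ × ℕ × ℕ → (ℕ × ℕ) × ℕ := fun t ↦ ((t.1 + t.2.1, t.1 + t.2.2), t.1)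
  let F : (ℕ × ℕ) × ℕ → M := fun p ↦
    if p.2 ≤ min p.1.1 p.1.2 then f (p.2, p.1.1 - p.2, p.1.2 - p.2) else 0
  have shift_injective : shift.Injective := fun s t h ↦ by grind
  have F_eq_zero : ∀ p ∉ Set.range shift, F p = 0 := fun p hp ↦
    if_neg fun h ↦ hp ⟨(p.2, p.1.1 - p.2, p.1.2 - p.2), by grind⟩
  have F_comp_shift : F ∘ shift = f := by
    ext t
    simp [F, shift]
  refine ((shift_injective.hasSum_iff F_eq_zero).1 (F_comp_shift ▸ hf)).prod_fiberwise fun q ↦ ?_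
  have hsum : ∑ k ∈ range (min q.1 q.2 + 1), f (k, q.1 - k, q.2 - k) =
      ∑ k ∈ range (min q.1 q.2 + 1), F (q, k) :=
    sum_congr rfl fun k hk ↦ (if_pos (mem_range_succ_iff.1 hk)).symm
  exact hsum ▸ hasSum_sum_of_ne_finset_zero fun k hk ↦ if_neg (mt mem_range_succ_iff.2 hk)

lemma Gamma_natCast_add_add_one_ne_zero {α : ℝ} (hα : ∀ k : ℕ, α + 1 ≠ -k) (n : ℕ) :
    Real.Gamma (n + α + 1) ≠ 0 :=
  Real.Gamma_ne_zero fun m h ↦ hα (n + m) (by push_cast; linarith)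

lemma ascPochhammer_eval_eq_Gamma_div {x : ℝ} (hx : ∀ k : ℕ, x ≠ -k) (n : ℕ) :
    (ascPochhammer ℝ n).eval x = Real.Gamma (x + n) / Real.Gamma x := by
  induction n with
  | zero => simp [Real.Gamma_ne_zero hx]
  | succ n ih =>
    have hxn : x + n ≠ 0 := fun h ↦ hx n (by linarith)
    rw [ascPochhammer_succ_eval, ih, Nat.cast_succ, ← add_assoc, Real.Gamma_add_one hxn]
    ring

lemma ringChoose_natCast_add_eq_Gamma_div {α : ℝ} (hα : ∀ k : ℕ, α + 1 ≠ -k) (n : ℕ) :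
    Ring.choose (n + α) n = Real.Gamma (n + α + 1) / (n ! * Real.Gamma (α + 1)) := by
  rw [Ring.choose_eq_smul, Polynomial.descPochhammer_smeval_eq_ascPochhammer,
    Polynomial.ascPochhammer_smeval_eq_eval, show (n : ℝ) + α - n + 1 = α + 1 by ring,
    ascPochhammer_eval_eq_Gamma_div hα, show α + 1 + n = n + α + 1 by ring, smul_eq_mul]
  field_simp

lemma Gamma_div_eq_sum_antidiagonal_choose {α : ℝ} (hα : ∀ k : ℕ, α + 1 ≠ -k) (m n : ℕ) :
    Real.Gamma (m + n + α + 1) / (m ! * Real.Gamma (n + α + 1)) =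
      ∑ q ∈ antidiagonal m,
        n.choose q.1 * (Real.Gamma (m + α + 1) / (q.2 ! * Real.Gamma (q.1 + α + 1))) := by
  have shifted (i : ℕ) : ∀ k : ℕ, (i : ℝ) + α + 1 ≠ -k := fun k h ↦
    hα (i + k) (by push_cast; linarith)
  have vandermonde := Ring.add_choose_eq (R := ℝ) m (Commute.all (n : ℝ) (m + α))
  rw [add_left_comm, ringChoose_natCast_add_eq_Gamma_div (shifted n), ← add_assoc] at vandermonde
  rw [vandermonde]
  refine sum_congr rfl fun q hq ↦ ?_
  have hm : (m : ℝ) = q.2 + q.1 := by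
    rw [← mem_antidiagonal.1 hq]
    push_cast
    ring
  rw [Ring.choose_natCast, hm, add_assoc _ _ α,
    ringChoose_natCast_add_eq_Gamma_div (shifted q.1)]

lemma Gamma_div_eq_sum_range_min {α : ℝ} (hα : ∀ k : ℕ, α + 1 ≠ -k) (m n : ℕ) :
    Real.Gamma (m + n + α + 1) /
        (m ! * Real.Gamma (m + α + 1) * (n ! * Real.Gamma (n + α + 1))) =
      ∑ k ∈ range (min m n + 1),
        1 / (k ! * Real.Gamma (k + α + 1)) * (1 / (m - k)! * (1 / (n - k)!)) := by
  have hΓ := Gamma_natCast_add_add_one_ne_zero hα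
  have hsub : range (min m n + 1) ⊆ range (m + 1) := range_subset_range.2 (by omega)
  calc Real.Gamma (m + n + α + 1) /
        (m ! * Real.Gamma (m + α + 1) * (n ! * Real.Gamma (n + α + 1)))
      = 1 / (n ! * Real.Gamma (m + α + 1)) *
          (Real.Gamma (m + n + α + 1) / (m ! * Real.Gamma (n + α + 1))) := by
        have := hΓ m
        have := hΓ n
        field_simp
    _ = ∑ k ∈ range (m + 1), 1 / (n ! * Real.Gamma (m + α + 1)) *
          (n.choose k * (Real.Gamma (m + α + 1) / ((m - k)! * Real.Gamma (k + α + 1)))) := by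
        rw [Gamma_div_eq_sum_antidiagonal_choose hα, mul_sum,
          Nat.sum_antidiagonal_eq_sum_range_succ_mk]
    _ = ∑ k ∈ range (min m n + 1), 1 / (n ! * Real.Gamma (m + α + 1)) *
          (n.choose k * (Real.Gamma (m + α + 1) / ((m - k)! * Real.Gamma (k + α + 1)))) := by
        refine (sum_subset hsub fun k hk hk' ↦ ?_).symm
        have hnk : n < k := by grind
        simp [Nat.choose_eq_zero_of_lt hnk]
    _ = _ := by
        refine sum_congr rfl fun k hk ↦ ?_
        have hkn : k ≤ n := by grind
        have := hΓ m
        have := hΓ k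
        rw [Nat.cast_choose ℝ hkn]
        field_simp

/-- The Bessel–Clifford function `C_α(w) = ∑_{n≥0} wⁿ/(n! Γ(n+α+1))`, the factor of both
`J_α(z) = (z/2)^α C_α(-(z/2)²)` and `I_α(z) = (z/2)^α C_α((z/2)²)` that is entire in `w`. -/
noncomputable def besselClifford (α w : ℝ) : ℝ :=
  ∑' n : ℕ, w ^ n / (n ! * Real.Gamma (n + α + 1))

lemma summable_norm_besselClifford (α w : ℝ) :
    Summable fun n : ℕ ↦ ‖w ^ n / (n ! * Real.Gamma (n + α + 1))‖ := by
  refine .of_norm_bounded_eventually_nat (Real.summable_pow_div_factorial |w|) ?_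
  filter_upwards [Filter.eventually_ge_atTop ⌈1 - α⌉₊] with n hn
  have hnα : 2 ≤ (n : ℝ) + α + 1 := by linarith [Nat.ceil_le.1 hn]
  have hΓ : 1 ≤ Real.Gamma (n + α + 1) := calc
    1 = Real.Gamma 2 := Real.Gamma_two.symm
    _ ≤ Real.Gamma (n + α + 1) :=
      Real.Gamma_strictMonoOn_Ici.monotoneOn Set.self_mem_Ici hnα hnα
  rw [norm_norm, norm_div, norm_pow, Real.norm_eq_abs, Real.norm_of_nonneg (by positivity)]
  gcongr
  exact le_mul_of_one_le_right (by positivity) hΓ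

lemma hasSum_exp_add_mul_besselClifford {α : ℝ} (hα : ∀ k : ℕ, α + 1 ≠ -k) (x y : ℝ) :
    HasSum (fun q : ℕ × ℕ ↦ x ^ q.1 * y ^ q.2 * (Real.Gamma (q.1 + q.2 + α + 1) /
        (q.1 ! * Real.Gamma (q.1 + α + 1) * (q.2 ! * Real.Gamma (q.2 + α + 1)))))
      (Real.exp (x + y) * besselClifford α (x * y)) := by
  have hexp (u : ℝ) : HasSum (fun n : ℕ ↦ u ^ n / n !) (Real.exp u) :=
    Real.exp_eq_exp_ℝ ▸ NormedSpace.expSeries_div_hasSum_exp u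
  have hC := summable_norm_besselClifford α (x * y)
  have hxy := (hexp x).summable.norm.mul_norm (hexp y).summable.norm
  have triple := hC.of_norm.hasSum.mul ((hexp x).mul (hexp y) hxy.of_norm)
    (summable_mul_of_summable_norm hC hxy)
  rw [Real.exp_add, mul_comm]
  refine (hasSum_sum_range_min triple).congr_fun fun q ↦ ?_
  rw [Gamma_div_eq_sum_range_min hα, mul_sum]
  refine sum_congr rfl fun k hk ↦ ?_
  have hkx : x ^ q.1 = x ^ k * x ^ (q.1 - k) := by
    rw [← pow_add, Nat.add_sub_cancel' (by grind)]
  have hky : y ^ q.2 = y ^ k * y ^ (q.2 - k) := by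
    rw [← pow_add, Nat.add_sub_cancel' (by grind)]
  rw [hkx, hky, mul_pow]
  ring

end DoubleSeries

section Weber

open Set
open scoped Nat

lemma Gamma_natCast_add_add_one_pos {α : ℝ} (hα : -1 < α) (n : ℕ) :
    0 < Real.Gamma (n + α + 1) :=
  Real.Gamma_pos_of_pos (by linarith [n.cast_nonneg (α := ℝ)])

lemma integrableOn_rpow_mul_exp_neg_mul {s p : ℝ} (hs : -1 < s) (hp : 0 < p) :
    IntegrableOn (fun z : ℝ ↦ z ^ s * Real.exp (-(p * z))) (Ioi 0) := by
  simpa using integrableOn_rpow_mul_exp_neg_mul_rpow hs one_pos hp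

/-- The term of index `q = (m, n)` in the double series of Weber's integrand
`z^α e^{-pz} C_α(zx) C_α(zy)`, with all powers of `z` collected so that it integrates to a Gamma
value. -/
noncomputable def weberTerm (α p x y : ℝ) (q : ℕ × ℕ) (z : ℝ) : ℝ :=
  z ^ (q.1 + q.2 + α) * Real.exp (-(p * z)) *
    (x ^ q.1 / (q.1 ! * Real.Gamma (q.1 + α + 1)) * (y ^ q.2 / (q.2 ! * Real.Gamma (q.2 + α + 1))))

variable {α p : ℝ}

lemma integrableOn_weberTerm (hα : -1 < α) (hp : 0 < p) (x y : ℝ) (q : ℕ × ℕ) :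
    IntegrableOn (weberTerm α p x y q) (Ioi 0) :=
  have hs : -1 < (q.1 : ℝ) + q.2 + α := by
    linarith [q.1.cast_nonneg (α := ℝ), q.2.cast_nonneg (α := ℝ)]
  (integrableOn_rpow_mul_exp_neg_mul hs hp).mul_const _

lemma norm_weberTerm (hα : -1 < α) (p x y : ℝ) (q : ℕ × ℕ) {z : ℝ} (hz : 0 ≤ z) :
    ‖weberTerm α p x y q z‖ = weberTerm α p |x| |y| q z := by
  have hΓ := fun n ↦ (Gamma_natCast_add_add_one_pos hα n).le
  simp only [weberTerm, norm_mul, norm_div, norm_pow, Real.norm_eq_abs, Real.abs_exp,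
    abs_of_nonneg (Real.rpow_nonneg hz _), abs_of_nonneg (hΓ _), Nat.abs_cast]

lemma integral_weberTerm (hα : -1 < α) (hp : 0 < p) (x y : ℝ) (q : ℕ × ℕ) :
    ∫ z in Ioi 0, weberTerm α p x y q z =
      (1 / p) ^ (α + 1) * ((x / p) ^ q.1 * (y / p) ^ q.2 * (Real.Gamma (q.1 + q.2 + α + 1) /
        (q.1 ! * Real.Gamma (q.1 + α + 1) * (q.2 ! * Real.Gamma (q.2 + α + 1))))) := by
  have hs : (0 : ℝ) < q.1 + q.2 + α + 1 := by
    linarith [q.1.cast_nonneg (α := ℝ), q.2.cast_nonneg (α := ℝ)]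
  have hgamma := Real.integral_rpow_mul_exp_neg_mul_Ioi hs hp
  have hp' : 0 < 1 / p := one_div_pos.2 hp
  have hpow : (1 / p) ^ (q.1 + q.2 + α + 1) =
      (1 / p) ^ (α + 1) * (1 / p) ^ q.1 * (1 / p) ^ q.2 := by
    rw [← Real.rpow_add_natCast hp'.ne', ← Real.rpow_add_natCast hp'.ne']
    ring_nf
  rw [add_sub_cancel_right, hpow] at hgamma
  simp only [weberTerm]
  rw [integral_mul_const, hgamma]
  simp only [div_pow, one_pow]
  ring

lemma tsum_weberTerm (α p x y : ℝ) {z : ℝ} (hz : 0 < z) :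
    ∑' q, weberTerm α p x y q z =
      z ^ α * Real.exp (-(p * z)) * (besselClifford α (z * x) * besselClifford α (z * y)) := by
  rw [besselClifford, besselClifford, tsum_mul_tsum_of_summable_norm
    (summable_norm_besselClifford α _) (summable_norm_besselClifford α _), ← tsum_mul_left]
  refine tsum_congr fun q ↦ ?_
  have hpow : z ^ (q.1 + q.2 + α) = z ^ α * z ^ q.1 * z ^ q.2 := by
    rw [← Real.rpow_add_natCast hz.ne', ← Real.rpow_add_natCast hz.ne']
    ring_nf
  rw [weberTerm, hpow, mul_pow, mul_pow]
  ring

lemma integral_rpow_mul_exp_mul_besselClifford_mul_besselClifford (hα : -1 < α) (hp : 0 < p)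
    (x y : ℝ) :
    ∫ z in Ioi 0, z ^ α * Real.exp (-(p * z)) *
        (besselClifford α (z * x) * besselClifford α (z * y)) =
      (1 / p) ^ (α + 1) * (Real.exp (x / p + y / p) * besselClifford α (x / p * (y / p))) := by
  have hα' (k : ℕ) : α + 1 ≠ -k := by linarith [k.cast_nonneg (α := ℝ)]
  have hseries (u v : ℝ) :
      HasSum (fun q ↦ ∫ z in Ioi 0, weberTerm α p u v q z) ((1 / p) ^ (α + 1) *
        (Real.exp (u / p + v / p) * besselClifford α (u / p * (v / p)))) := by
    simpa only [integral_weberTerm hα hp] using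
      (hasSum_exp_add_mul_besselClifford hα' (u / p) (v / p)).mul_left ((1 / p) ^ (α + 1))
  have hnorm (q : ℕ × ℕ) :
      ∫ z in Ioi 0, weberTerm α p |x| |y| q z = ∫ z in Ioi 0, ‖weberTerm α p x y q z‖ :=
    setIntegral_congr_fun measurableSet_Ioi fun z hz ↦
      (norm_weberTerm hα p x y q (le_of_lt hz)).symm
  have hswap := hasSum_integral_of_summable_integral_norm (integrableOn_weberTerm hα hp x y)
    ((hseries |x| |y|).summable.congr hnorm)
  rw [← setIntegral_congr_fun measurableSet_Ioi fun z hz ↦ tsum_weberTerm α p x y hz]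
  exact hswap.unique (hseries x y)

lemma rpow_two_mul_natCast_add (hα : -1 < α) {s : ℝ} (hs : 0 ≤ s) (n : ℕ) :
    s ^ (2 * (n : ℝ) + α) = s ^ α * (s ^ 2) ^ n := by
  rcases n.eq_zero_or_pos with rfl | hn
  · simp
  · have hn' : (1 : ℝ) ≤ n := Nat.one_le_cast.2 hn
    have hne : α + (2 * n : ℕ) ≠ 0 := by
      push_cast
      linarith
    rw [← pow_mul, ← Real.rpow_add_natCast' hs hne, add_comm]
    push_cast
    rfl

lemma Jb_eq_rpow_mul_besselClifford (hα : -1 < α) {z : ℝ} (hz : 0 ≤ z) :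
    Jb α z = (z / 2) ^ α * besselClifford α (-(z / 2) ^ 2) := by
  rw [Jb, besselClifford, ← tsum_mul_left]
  refine tsum_congr fun n ↦ ?_
  rw [rpow_two_mul_natCast_add hα (by positivity), neg_pow ((z / 2) ^ 2)]
  ring

lemma Ib_eq_rpow_mul_besselClifford (hα : -1 < α) {z : ℝ} (hz : 0 ≤ z) :
    Ib α z = (z / 2) ^ α * besselClifford α ((z / 2) ^ 2) := by
  rw [Ib, besselClifford, ← tsum_mul_left]
  refine tsum_congr fun n ↦ ?_
  rw [rpow_two_mul_natCast_add hα (by positivity)]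
  ring

lemma Jb_two_mul_sqrt (hα : -1 < α) {w : ℝ} (hw : 0 ≤ w) :
    Jb α (2 * √w) = √w ^ α * besselClifford α (-w) := by
  rw [Jb_eq_rpow_mul_besselClifford hα (by positivity), mul_div_cancel_left₀ _ two_ne_zero,
    Real.sq_sqrt hw]

lemma integral_exp_mul_Jb_mul_Jb (hα : -1 < α) (hp : 0 < p) {x y : ℝ} (hx : 0 ≤ x) (hy : 0 ≤ y) :
    ∫ z in Ioi 0, Real.exp (-(p * z)) * Jb α (2 * √(z * x)) * Jb α (2 * √(z * y)) =
      1 / p * Real.exp (-(x + y) / p) * Ib α (2 * √(x * y) / p) := by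
  have hJJ : ∀ z ∈ Ioi (0 : ℝ),
      Real.exp (-(p * z)) * Jb α (2 * √(z * x)) * Jb α (2 * √(z * y)) =
        √(x * y) ^ α * (z ^ α * Real.exp (-(p * z)) *
          (besselClifford α (z * -x) * besselClifford α (z * -y))) := fun z hz ↦ by
    have hz' : 0 ≤ z := le_of_lt hz
    have hroots : √(z * x) * √(z * y) = √(x * y) * z := by
      rw [← Real.sqrt_mul (by positivity), show z * x * (z * y) = x * y * z ^ 2 by ring,
        Real.sqrt_mul (by positivity), Real.sqrt_sq hz']
    have hpow : √(z * x) ^ α * √(z * y) ^ α = √(x * y) ^ α * z ^ α := by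
      rw [← Real.mul_rpow (by positivity) (by positivity), hroots,
        Real.mul_rpow (by positivity) hz']
    rw [Jb_two_mul_sqrt hα (by positivity), Jb_two_mul_sqrt hα (by positivity), mul_neg, mul_neg]
    linear_combination Real.exp (-(p * z)) * besselClifford α (-(z * x)) *
      besselClifford α (-(z * y)) * hpow
  have hI : Ib α (2 * √(x * y) / p) =
      √(x * y) ^ α * (1 / p) ^ α * besselClifford α (-x / p * (-y / p)) := by
    rw [Ib_eq_rpow_mul_besselClifford hα (by positivity),
      show 2 * √(x * y) / p / 2 = √(x * y) * (1 / p) by ring,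
      Real.mul_rpow (by positivity) (by positivity), mul_pow, Real.sq_sqrt (by positivity)]
    ring_nf
  rw [setIntegral_congr_fun measurableSet_Ioi hJJ, integral_const_mul,
    integral_rpow_mul_exp_mul_besselClifford_mul_besselClifford hα hp, hI, ← add_div, ← neg_add,
    Real.rpow_add (by positivity), Real.rpow_one]
  ring

end Weber

-- For `α < 0` the value `y = 0` is a singularity, hidden by Lean's `0 ^ (α / 2) = 0`.
theorem stmt7_general {α t x y : ℝ} (hαy : -1 < α ∧ 0 < y ∨ 0 ≤ α ∧ 0 ≤ y) (ht : 0 < t)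
    (hx : 0 < x) :
    qI α t x y = (y / x) ^ (α / 2) *
      ∫ z in Set.Ioi (0 : ℝ),
        Real.exp (-2 * t * z) * Jb α (2 * Real.sqrt (z * x)) * Jb α (2 * Real.sqrt (z * y)) := by
  obtain ⟨hα, hy⟩ : -1 < α ∧ 0 ≤ y := by grind
  have weber := integral_exp_mul_Jb_mul_Jb hα (mul_pos two_pos ht) hx.le hy
  rw [mul_div_mul_left _ _ two_ne_zero] at weber
  simp only [neg_mul, weber, qI]
  ring

/-- Integral representation of the squared Bessel transition density:
`q_t(x,y) = (y/x)^{α/2} ∫_0^∞ e^{-2tz} J_α(2√(zx)) J_α(2√(zy)) dz` for `x > 0`. -/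
theorem stmt7 (α : ℝ) (hα : 0 ≤ α) (t : ℝ) (ht : 0 < t) (x y : ℝ) (hx : 0 < x) (hy : 0 ≤ y) :
    qI α t x y = (y / x) ^ (α / 2) *
      ∫ z in Set.Ioi (0 : ℝ),
        Real.exp (-2 * t * z) * Jb α (2 * Real.sqrt (z * x)) * Jb α (2 * Real.sqrt (z * y)) :=
  stmt7_general (.inr ⟨hα, hy⟩) ht hx
end

section
/- Fix α ≥ 0. For every ε > 0 there exists L > 0 such that for all x ∈ [0,∞) and all M ≥ 1, M^{-1} ∑_{j : |j/M − x| ≥ L} p_1(x, j/M) ≤ ε. -/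
/-- `h_α(z) = 2^{-α} ∑_{n≥0} (z/2)^{2n}/(n! Γ(n+α+1))`. -/
noncomputable def hA (α z : ℝ) : ℝ :=
  (2 : ℝ) ^ (-α) * ∑' n : ℕ, (z / 2) ^ (2 * n) / ((n.factorial : ℝ) * Real.Gamma ((n : ℝ) + α + 1))

/-- The index-`α` Bessel transition density at time 1:
`p_1(x,y) = y^{2α+1} e^{-(x²+y²)/2} h_α(xy)`. -/
noncomputable def p1 (α x y : ℝ) : ℝ :=
  y ^ (2 * α + 1) * Real.exp (-(x ^ 2 + y ^ 2) / 2) * hA α (x * y)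

/-!
By Legendre's duplication formula the coefficients of `h_α` are those of `cosh` multiplied by
`Γ(n + 1/2) / Γ(n + α + 1)`, which log-convexity of `Γ` bounds by a multiple of
`(2n + 1)^{-(α + 1/2)}`. Summing the exponential series with these weights gives
`h_α(z) (1 + z)^{α + 1/2} ≤ C e^z`, hence `p_1(x, y) ≤ C (1 + (y - x)²)^{α + 1/2} e^{-(y - x)²/2}`.
The right-hand side is at most `K (1 + (y - x)²)^{-2}`: one factor `(1 + (y - x)²)⁻¹` is small
when `|y - x| ≥ L`, and the Riemann sums of the other one are bounded by comparison with the
increments of the arctangent.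
-/

section

open Real
open scoped Nat

theorem rpow_le_one_add_pow {a β : ℝ} {m : ℕ} (ha : 0 ≤ a) (hβ : 0 ≤ β) (hm : β ≤ m) :
    a ^ β ≤ 1 + a ^ m := by
  rcases le_total a 1 with h | h
  · linarith [rpow_le_one ha h hβ, pow_nonneg ha m]
  · have := rpow_le_rpow_of_exponent_le h hm
    rw [rpow_natCast] at this
    linarith

theorem rpow_le_rpow_mul_exp {s c t : ℝ} (hs : 0 < s) (hc : 0 < c) (ht : 0 ≤ t) :
    t ^ s ≤ (s / c) ^ s * exp (c * t) := by
  have h_le_exp : c / s * t ≤ exp (c / s * t) := by linarith [add_one_le_exp (c / s * t)]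
  calc t ^ s = (s / c) ^ s * (c / s * t) ^ s := by
        rw [← mul_rpow (by positivity) (by positivity)]
        congr 1
        field_simp
    _ ≤ (s / c) ^ s * exp (c / s * t) ^ s := by gcongr
    _ = (s / c) ^ s * exp (c * t) := by
        rw [← exp_mul]
        congr 2
        field_simp

theorem rpow_two_mul_le {β x y : ℝ} (hβ : 0 ≤ β) (hx : 0 ≤ x) (hy : 0 ≤ y) :
    y ^ (2 * β) ≤ 2 ^ β * (1 + (y - x) ^ 2) ^ β * (1 + x * y) ^ β := by
  have hxy : 0 ≤ x * y := mul_nonneg hx hy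
  have h_sq : y ^ 2 ≤ 2 * (1 + (y - x) ^ 2) * (1 + x * y) := by
    nlinarith [mul_nonneg (sq_nonneg (y - x)) hxy, sq_nonneg (y - x), sq_nonneg x]
  calc y ^ (2 * β) = (y ^ 2) ^ β := by rw [rpow_mul hy, rpow_two]
    _ ≤ (2 * (1 + (y - x) ^ 2) * (1 + x * y)) ^ β := by gcongr
    _ = 2 ^ β * (1 + (y - x) ^ 2) ^ β * (1 + x * y) ^ β := by
        rw [mul_rpow (by positivity) (by positivity), mul_rpow (by positivity) (by positivity)]

theorem Gamma_mul_rpow_le_Gamma_add {s β : ℝ} (hs : 0 < s) (hβ : 1 ≤ β) :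
    Gamma s * s ^ β ≤ Gamma (s + β) := by
  have hΓ : 0 < Gamma s := Gamma_pos_of_pos hs
  have hΓβ : 0 < Gamma (s + β) := Gamma_pos_of_pos (by linarith)
  have h_slope := convexOn_log_Gamma.secant_mono (a := s) (x := s + 1) (y := s + β)
    hs (show 0 < s + 1 by linarith) (show 0 < s + β by linarith)
    (by linarith) (by linarith) (by linarith)
  simp only [Function.comp_apply, add_sub_cancel_left, div_one, Gamma_add_one hs.ne',
    log_mul hs.ne' hΓ.ne', add_sub_cancel_right] at h_slope
  rw [le_div_iff₀ (by linarith)] at h_slope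
  rw [← log_le_log_iff (by positivity) hΓβ, log_mul hΓ.ne' (by positivity), log_rpow hs]
  linarith

-- The previous bound applied to `β + 1` covers the exponents `β < 1`, at the cost of a constant.
theorem Gamma_div_Gamma_add_le {s β : ℝ} (hs : 1 / 2 ≤ s) (hβ : 0 ≤ β) :
    Gamma s / Gamma (s + β) ≤ (1 + 2 * β) / s ^ β := by
  have hs0 : 0 < s := by linarith
  have hΓβ : 0 < Gamma (s + β) := Gamma_pos_of_pos (by linarith)
  have h_shift : Gamma s * s ^ β * s ≤ (s + β) * Gamma (s + β) := by
    have := Gamma_mul_rpow_le_Gamma_add hs0 (show 1 ≤ β + 1 by linarith)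
    rwa [rpow_add_one hs0.ne', ← add_assoc, Gamma_add_one (by linarith), ← mul_assoc] at this
  rw [div_le_div_iff₀ hΓβ (by positivity)]
  refine le_of_mul_le_mul_right (h_shift.trans ?_) hs0
  calc (s + β) * Gamma (s + β) ≤ (1 + 2 * β) * s * Gamma (s + β) := by gcongr; nlinarith
    _ = (1 + 2 * β) * Gamma (s + β) * s := by ring

theorem four_pow_mul_factorial_mul_Gamma_add_half (n : ℕ) :
    4 ^ n * (n ! : ℝ) * Gamma (n + 1 / 2) = √π * (2 * n)! := by
  have h_dup := Gamma_mul_Gamma_add_half (n + 1 / 2)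
  rw [show (n : ℝ) + 1 / 2 + 1 / 2 = n + 1 by ring, Gamma_nat_eq_factorial,
    show 2 * ((n : ℝ) + 1 / 2) = (2 * n : ℕ) + 1 by push_cast; ring, Gamma_nat_eq_factorial,
    show 1 - (((2 * n : ℕ) : ℝ) + 1) = -(2 * n : ℕ) by ring, rpow_neg two_pos.le, rpow_natCast,
    pow_mul, show (2 : ℝ) ^ 2 = 4 by norm_num] at h_dup
  rw [mul_assoc, mul_comm (n ! : ℝ), h_dup]
  field_simp

theorem factorial_add_le_factorial_mul_pow (k m : ℕ) :
    (k + m)! ≤ k ! * ((m + 1) * (k + 1)) ^ m := by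
  rw [← Nat.factorial_mul_ascFactorial]
  gcongr
  calc (k + 1).ascFactorial m ≤ (k + m) ^ m := Nat.ascFactorial_le_pow_add k m
    _ ≤ ((m + 1) * (k + 1)) ^ m := by gcongr; nlinarith

theorem pow_div_factorial_mul_rpow_le {β z : ℝ} {m : ℕ} (hβ : 0 ≤ β) (hm : β ≤ m) (hz : 0 ≤ z)
    (k : ℕ) :
    z ^ k / k ! * ((1 + z) / (k + 1)) ^ β ≤
      z ^ k / k ! + (m + 1) ^ m * ((1 + z) ^ (k + m) / (k + m)!) := by
  have h_fact : ((k + m)! : ℝ) ≤ k ! * ((m + 1) * (k + 1)) ^ m := by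
    exact_mod_cast factorial_add_le_factorial_mul_pow k m
  calc z ^ k / k ! * ((1 + z) / (k + 1)) ^ β
      ≤ z ^ k / k ! * (1 + ((1 + z) / (k + 1)) ^ m) := by
        gcongr
        exact rpow_le_one_add_pow (by positivity) hβ hm
    _ = z ^ k / k ! + z ^ k * (1 + z) ^ m * (m + 1) ^ m / (k ! * ((m + 1) * (k + 1)) ^ m) := by
        rw [mul_pow, div_pow]
        field_simp
    _ ≤ z ^ k / k ! + (1 + z) ^ k * (1 + z) ^ m * (m + 1) ^ m / (k + m)! := by
        gcongr
        linarith
    _ = z ^ k / k ! + (m + 1) ^ m * ((1 + z) ^ (k + m) / (k + m)!) := by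
        rw [pow_add]
        ring

theorem hasSum_pow_div_factorial (z : ℝ) : HasSum (fun k : ℕ ↦ z ^ k / k !) (exp z) := by
  rw [exp_eq_exp_ℝ]
  exact NormedSpace.expSeries_div_hasSum_exp z

theorem exists_tsum_pow_div_factorial_mul_rpow_le {β : ℝ} (hβ : 0 ≤ β) :
    ∃ C > 0, ∀ z : ℝ, 0 ≤ z →
      Summable (fun k : ℕ ↦ z ^ k / k ! * ((1 + z) / (k + 1)) ^ β) ∧
        ∑' k : ℕ, z ^ k / k ! * ((1 + z) / (k + 1)) ^ β ≤ C * exp z := by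
  set m := ⌈β⌉₊
  refine ⟨1 + (m + 1) ^ m * exp 1, by positivity, fun z hz ↦ ?_⟩
  have h_exp := hasSum_pow_div_factorial z
  have h_exp_succ := hasSum_pow_div_factorial (1 + z)
  have h_inj : Function.Injective (· + m) := add_left_injective m
  have h_tail : Summable fun k : ℕ ↦ (1 + z) ^ (k + m) / (k + m)! :=
    h_exp_succ.summable.comp_injective h_inj
  have h_tail_le : ∑' k : ℕ, (1 + z) ^ (k + m) / (k + m)! ≤ exp (1 + z) := by
    rw [← h_exp_succ.tsum_eq]
    exact h_tail.tsum_le_tsum_of_inj _ h_inj (fun k _ ↦ by positivity) (fun k ↦ le_rfl)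
      h_exp_succ.summable
  have h_le := pow_div_factorial_mul_rpow_le hβ (Nat.le_ceil β) hz
  have h_major := h_exp.summable.add (h_tail.mul_left (((m : ℝ) + 1) ^ m))
  have h_summable := h_major.of_nonneg_of_le (fun k ↦ by positivity) h_le
  refine ⟨h_summable, ?_⟩
  calc ∑' k : ℕ, z ^ k / k ! * ((1 + z) / (k + 1)) ^ β
      ≤ ∑' k : ℕ, (z ^ k / k ! + (m + 1) ^ m * ((1 + z) ^ (k + m) / (k + m)!)) :=
        h_summable.tsum_le_tsum h_le h_major
    _ = exp z + (m + 1) ^ m * ∑' k : ℕ, (1 + z) ^ (k + m) / (k + m)! := by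
        rw [h_exp.summable.tsum_add (h_tail.mul_left _), h_exp.tsum_eq, tsum_mul_left]
    _ ≤ exp z + (m + 1) ^ m * exp (1 + z) := by gcongr
    _ = (1 + (m + 1) ^ m * exp 1) * exp z := by
        rw [exp_add]
        ring

theorem mul_inv_one_add_sq_le_arctan_add_sub {u δ : ℝ} (h0 : 0 ≤ δ) (h1 : δ ≤ 1) :
    δ * (1 + u ^ 2)⁻¹ ≤ 3 * (arctan (u + δ) - arctan u) := by
  have h_deriv : ∀ c ∈ interior (Set.Icc u (u + δ)), (3 * (1 + u ^ 2))⁻¹ ≤ deriv arctan c := by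
    intro c hc
    obtain ⟨huc, hcu⟩ := interior_subset hc
    have hc_sq : c ^ 2 ≤ 2 * u ^ 2 + 2 := by nlinarith [sq_nonneg (2 * u - c)]
    simp only [Real.deriv_arctan, one_div]
    gcongr
    linarith [sq_nonneg u]
  have h_mvt := (convex_Icc u (u + δ)).mul_sub_le_image_sub_of_le_deriv
    continuous_arctan.continuousOn differentiable_arctan.differentiableOn h_deriv
    u (by simpa using h0) (u + δ) (by simpa using h0) (by linarith)
  rw [add_sub_cancel_left, mul_inv] at h_mvt
  linarith

theorem sum_range_inv_mul_inv_one_add_sq_le (x : ℝ) {M : ℝ} (hM : 1 ≤ M) (N : ℕ) :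
    ∑ j ∈ Finset.range N, M⁻¹ * (1 + (j / M - x) ^ 2)⁻¹ ≤ 3 * π := by
  calc ∑ j ∈ Finset.range N, M⁻¹ * (1 + (j / M - x) ^ 2)⁻¹
      ≤ ∑ j ∈ Finset.range N,
          (3 * arctan ((j + 1 : ℕ) / M - x) - 3 * arctan (j / M - x)) := by
        gcongr with j
        have h_step : ((j + 1 : ℕ) : ℝ) / M - x = j / M - x + M⁻¹ := by
          push_cast
          ring
        rw [h_step, ← mul_sub]
        exact mul_inv_one_add_sq_le_arctan_add_sub (by positivity) (inv_le_one_of_one_le₀ hM)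
    _ = 3 * arctan (N / M - x) - 3 * arctan ((0 : ℕ) / M - x) :=
        Finset.sum_range_sub (fun j : ℕ ↦ 3 * arctan (j / M - x)) N
    _ ≤ 3 * π := by
        linarith [arctan_lt_pi_div_two (N / M - x), neg_pi_div_two_lt_arctan ((0 : ℕ) / M - x)]

theorem summable_inv_mul_inv_one_add_sq (x : ℝ) {M : ℝ} (hM : 1 ≤ M) :
    Summable fun j : ℕ ↦ M⁻¹ * (1 + (j / M - x) ^ 2)⁻¹ :=
  summable_of_sum_range_le (fun j ↦ by positivity) (sum_range_inv_mul_inv_one_add_sq_le x hM)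

theorem tsum_inv_mul_inv_one_add_sq_le (x : ℝ) {M : ℝ} (hM : 1 ≤ M) :
    ∑' j : ℕ, M⁻¹ * (1 + (j / M - x) ^ 2)⁻¹ ≤ 3 * π :=
  Real.tsum_le_of_sum_range_le (fun j ↦ by positivity) (sum_range_inv_mul_inv_one_add_sq_le x hM)

variable {α : ℝ}

theorem hA_term_nonneg (hα : -1 < α) (z : ℝ) (n : ℕ) :
    0 ≤ (z / 2) ^ (2 * n) / ((n ! : ℝ) * Gamma (n + α + 1)) := by
  have hΓ : 0 < Gamma (n + α + 1) := Gamma_pos_of_pos (by linarith [n.cast_nonneg (α := ℝ)])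
  have := (even_two_mul n).pow_nonneg (z / 2)
  positivity

theorem hA_nonneg (hα : -1 < α) (z : ℝ) : 0 ≤ hA α z :=
  mul_nonneg (by positivity) (tsum_nonneg (hA_term_nonneg hα z))

theorem p1_nonneg (hα : -1 < α) (x : ℝ) {y : ℝ} (hy : 0 ≤ y) : 0 ≤ p1 α x y :=
  mul_nonneg (by positivity) (hA_nonneg hα _)

theorem hA_term_eq (α z : ℝ) (n : ℕ) :
    (z / 2) ^ (2 * n) / ((n ! : ℝ) * Gamma (n + α + 1)) =
      (√π)⁻¹ * (z ^ (2 * n) / (2 * n)!) * (Gamma (n + 1 / 2) / Gamma (n + α + 1)) := by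
  have : 0 < Gamma (n + 1 / 2) := Gamma_pos_of_pos (by positivity)
  have h_fact : ((2 * n)! : ℝ) = 4 ^ n * n ! * Gamma (n + 1 / 2) / √π := by
    rw [four_pow_mul_factorial_mul_Gamma_add_half]
    field_simp
  rw [h_fact, div_pow, pow_mul 2, show (2 : ℝ) ^ 2 = 4 by norm_num]
  field_simp

theorem hA_term_mul_rpow_le (hα : -1 / 2 ≤ α) {z : ℝ} (hz : 0 ≤ z) (n : ℕ) :
    (z / 2) ^ (2 * n) / ((n ! : ℝ) * Gamma (n + α + 1)) * (1 + z) ^ (α + 1 / 2) ≤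
      (√π)⁻¹ * (2 * α + 2) * 2 ^ (α + 1 / 2) *
        (z ^ (2 * n) / (2 * n)! * ((1 + z) / ((2 * n : ℕ) + 1)) ^ (α + 1 / 2)) := by
  have h_ratio : Gamma (n + 1 / 2) / Gamma (n + α + 1) ≤
      (2 * α + 2) / (n + 1 / 2 : ℝ) ^ (α + 1 / 2) := by
    have := Gamma_div_Gamma_add_le (s := n + 1 / 2) (β := α + 1 / 2) (by simp) (by linarith)
    convert this using 2 <;> ring_nf
  have h_half : (n + 1 / 2 : ℝ) = ((2 * n : ℕ) + 1) / 2 := by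
    push_cast
    ring
  rw [hA_term_eq]
  calc _ ≤ (√π)⁻¹ * (z ^ (2 * n) / (2 * n)!) * ((2 * α + 2) / (n + 1 / 2 : ℝ) ^ (α + 1 / 2)) *
        (1 + z) ^ (α + 1 / 2) := by gcongr
    _ = _ := by
      rw [h_half, div_rpow (by positivity) two_pos.le, div_rpow (by positivity) (by positivity)]
      field_simp

theorem exists_hA_mul_rpow_le (hα : -1 / 2 ≤ α) :
    ∃ C > 0, ∀ z : ℝ, 0 ≤ z → hA α z * (1 + z) ^ (α + 1 / 2) ≤ C * exp z := by
  obtain ⟨C, hC, h_series⟩ :=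
    exists_tsum_pow_div_factorial_mul_rpow_le (show 0 ≤ α + 1 / 2 by linarith)
  set K := (√π)⁻¹ * (2 * α + 2) * 2 ^ (α + 1 / 2)
  have hK0 : 0 < K := by
    have : 0 < 2 * α + 2 := by linarith
    positivity
  refine ⟨2 ^ (-α) * (K * C), by positivity, fun z hz ↦ ?_⟩
  obtain ⟨h_summable, h_tsum⟩ := h_series z hz
  have h_inj : Function.Injective (2 * · : ℕ → ℕ) := mul_right_injective₀ two_ne_zero
  have h_terms := hA_term_mul_rpow_le hα hz
  have h_nonneg (n : ℕ) := mul_nonneg (hA_term_nonneg (show -1 < α by linarith) z n)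
    (rpow_nonneg (show 0 ≤ 1 + z by linarith) (α + 1 / 2))
  have h_even := (h_summable.comp_injective h_inj).mul_left K
  have h_tsum_terms : ∑' n : ℕ, (z / 2) ^ (2 * n) / ((n ! : ℝ) * Gamma (n + α + 1)) *
      (1 + z) ^ (α + 1 / 2) ≤ K * (C * exp z) :=
    calc _ ≤ ∑' k : ℕ, K * (z ^ k / k ! * ((1 + z) / (k + 1)) ^ (α + 1 / 2)) :=
          (h_even.of_nonneg_of_le h_nonneg h_terms).tsum_le_tsum_of_inj (2 * ·) h_inj
            (fun k _ ↦ by positivity) h_terms (h_summable.mul_left K)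
      _ ≤ K * (C * exp z) := by
          rw [tsum_mul_left]
          gcongr
  rw [hA, mul_assoc, ← tsum_mul_right]
  calc _ ≤ 2 ^ (-α) * (K * (C * exp z)) := by gcongr
    _ = 2 ^ (-α) * (K * C) * exp z := by ring

theorem exists_p1_le_rpow_mul_exp (hα : -1 / 2 ≤ α) :
    ∃ C > 0, ∀ x y : ℝ, 0 ≤ x → 0 ≤ y →
      p1 α x y ≤ C * (1 + (y - x) ^ 2) ^ (α + 1 / 2) * exp (-(y - x) ^ 2 / 2) := by
  obtain ⟨C, hC, h_hA⟩ := exists_hA_mul_rpow_le hα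
  refine ⟨2 ^ (α + 1 / 2) * C, by positivity, fun x y hx hy ↦ ?_⟩
  have h_nonneg : 0 ≤ hA α (x * y) := hA_nonneg (by linarith) _
  set G := exp (-(x ^ 2 + y ^ 2) / 2)
  set t := 1 + (y - x) ^ 2
  calc p1 α x y
      ≤ 2 ^ (α + 1 / 2) * t ^ (α + 1 / 2) * (1 + x * y) ^ (α + 1 / 2) * G * hA α (x * y) := by
        rw [p1, show 2 * α + 1 = 2 * (α + 1 / 2) by ring]
        gcongr
        exact rpow_two_mul_le (by linarith) hx hy
    _ = 2 ^ (α + 1 / 2) * t ^ (α + 1 / 2) * G * (hA α (x * y) * (1 + x * y) ^ (α + 1 / 2)) := by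
        ring
    _ ≤ 2 ^ (α + 1 / 2) * t ^ (α + 1 / 2) * G * (C * exp (x * y)) := by
        gcongr ?_ * ?_
        exact h_hA _ (mul_nonneg hx hy)
    _ = 2 ^ (α + 1 / 2) * C * t ^ (α + 1 / 2) * (G * exp (x * y)) := by ring
    _ = 2 ^ (α + 1 / 2) * C * t ^ (α + 1 / 2) * exp (-(y - x) ^ 2 / 2) := by
        rw [← exp_add]
        ring_nf

theorem exists_p1_le_div_sq (hα : -1 / 2 ≤ α) :
    ∃ C > 0, ∀ x y : ℝ, 0 ≤ x → 0 ≤ y → p1 α x y ≤ C / (1 + (y - x) ^ 2) ^ 2 := by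
  obtain ⟨C, hC, h_gauss⟩ := exists_p1_le_rpow_mul_exp hα
  set s := α + 1 / 2 + 2 with hs
  have hs0 : 0 < s := by linarith
  refine ⟨C * ((s / (1 / 2)) ^ s * exp (1 / 2)), by positivity, fun x y hx hy ↦ ?_⟩
  set t := 1 + (y - x) ^ 2 with ht
  have ht0 : 0 < t := by positivity
  rw [le_div_iff₀ (by positivity)]
  calc p1 α x y * t ^ 2 ≤ C * t ^ (α + 1 / 2) * exp (-(y - x) ^ 2 / 2) * t ^ 2 := by
        gcongr
        exact h_gauss x y hx hy
    _ = C * (t ^ s * exp (-(y - x) ^ 2 / 2)) := by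
        rw [hs, rpow_add ht0 _ 2, rpow_two]
        ring
    _ ≤ C * ((s / (1 / 2)) ^ s * exp (1 / 2 * t) * exp (-(y - x) ^ 2 / 2)) := by
        gcongr
        exact rpow_le_rpow_mul_exp hs0 one_half_pos ht0.le
    _ = C * ((s / (1 / 2)) ^ s * exp (1 / 2)) := by
        rw [mul_assoc ((s / (1 / 2)) ^ s), ← exp_add, ht]
        ring_nf

theorem div_one_add_sq_sq_le {C L d : ℝ} (hC : 0 ≤ C) (hL : 0 < L) (hd : L ≤ |d|) :
    C / (1 + d ^ 2) ^ 2 ≤ C / L * (1 + d ^ 2)⁻¹ := by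
  have h_le : L ≤ 1 + d ^ 2 := by nlinarith [sq_abs d, sq_nonneg (|d| - 1)]
  calc C / (1 + d ^ 2) ^ 2 = C / (1 + d ^ 2) * (1 + d ^ 2)⁻¹ := by field_simp
    _ ≤ C / L * (1 + d ^ 2)⁻¹ := by gcongr

theorem stmt10_general (hα : -1 / 2 ≤ α) {ε : ℝ} (hε : 0 < ε) :
    ∃ L > 0, ∀ x M : ℝ, 0 ≤ x → 1 ≤ M →
      Summable (fun j : ℕ ↦ if L ≤ |(j : ℝ) / M - x| then p1 α x (j / M) else 0) ∧
        M⁻¹ * ∑' j : ℕ, (if L ≤ |(j : ℝ) / M - x| then p1 α x (j / M) else 0) ≤ ε := by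
  obtain ⟨C, hC, h_p1⟩ := exists_p1_le_div_sq hα
  have hL : 0 < C * (3 * π) / ε := by positivity
  set L := C * (3 * π) / ε with hL_def
  refine ⟨L, hL, fun x M hx hM ↦ ?_⟩
  set f : ℕ → ℝ := fun j ↦ if L ≤ |(j : ℝ) / M - x| then p1 α x (j / M) else 0
  have hM0 : 0 < M := by linarith
  have h_nonneg (j : ℕ) : 0 ≤ M⁻¹ * f j :=
    mul_nonneg (by positivity)
      (ite_nonneg (p1_nonneg (by linarith) x (by positivity)) le_rfl)
  have h_le (j : ℕ) : M⁻¹ * f j ≤ C / L * (M⁻¹ * (1 + (j / M - x) ^ 2)⁻¹) := by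
    rw [mul_left_comm]
    gcongr
    dsimp only [f]
    split_ifs with hj
    · exact (h_p1 x (j / M) hx (by positivity)).trans (div_one_add_sq_sq_le hC.le hL hj)
    · positivity
  have h_major := (summable_inv_mul_inv_one_add_sq x hM).mul_left (C / L)
  have h_summable := h_major.of_nonneg_of_le h_nonneg h_le
  refine ⟨(summable_mul_left_iff (inv_ne_zero hM0.ne')).1 h_summable, ?_⟩
  calc M⁻¹ * ∑' j, f j ≤ C / L * ∑' j : ℕ, M⁻¹ * (1 + (j / M - x) ^ 2)⁻¹ := by
        rw [← tsum_mul_left, ← tsum_mul_left]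
        exact h_summable.tsum_le_tsum h_le h_major
    _ ≤ C / L * (3 * π) := by
        gcongr
        exact tsum_inv_mul_inv_one_add_sq_le x hM
    _ = ε := by
        rw [hL_def]
        field_simp

end

/-- For `α ≥ 0` and every `ε > 0` there is `L > 0` such that for all `x ≥ 0`
and `M ≥ 1`, `M⁻¹ ∑_{j : |j/M − x| ≥ L} p_1(x, j/M) ≤ ε`. -/
theorem stmt10 (α : ℝ) (hα : 0 ≤ α) (ε : ℝ) (hε : 0 < ε) :
    ∃ L > 0, ∀ x M : ℝ, 0 ≤ x → 1 ≤ M →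
      M⁻¹ * ∑' j : ℕ, (if L ≤ |(j : ℝ) / M - x| then p1 α x ((j : ℝ) / M) else 0) ≤ ε := by
  obtain ⟨L, hL, h⟩ := stmt10_general (show -1 / 2 ≤ α by linarith) hε
  exact ⟨L, hL, fun x M hx hM ↦ (h x M hx hM).2⟩
end
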